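/- arXiv:1902.02914 — 8 statements merged into one kernel-verified Lean document; each statement's English description precedes it below -/
import Mathlib

section
/- The polynomial G(u,v) = 4000000u⁸ − 1998092052000u⁷ − 676000000u⁶v − 71509053768117831u⁶ + 224328787434000u⁵v + 42841500000u⁴v² − 395361312253919627346u⁵ + 8460248600243212740u⁴v − 8372335651553250u³v² − 1206702250000u²v³ + 36392104317997507611465u⁴ + 31914880192757153442492u³v − 332936970436116610650u²v² + 103850637726127500uv³ + 12745792515625v⁴ − 826890695963630262273456u³ − 9875439964247275663003440u²v − 644187721569909674246640uv² + 4362752394549791982000v³ − 168880832609781468337056u² + 30826420907787244648372032uv + 474410438868202394564990304v² + 2545539129474834804480u + 6939213188282316797541120v + 960605665900794374400 is irreducible in ℚ[u,v]. -/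
/-!
Substituting `u = 13 x`, `v = w + 4 x²` turns `G` into
`12745792515625 w⁴ + b₃(x) w³ + b₂(x) w² + b₁(x) w + b₀(x)` with `deg b₃ ≤ 1`, `deg b₂ ≤ 3`,
`deg b₁ ≤ 5` and `deg b₀ = 7`, so its Newton polygon at `x = ∞` is the single segment joining `w⁴`
to `x⁷`. As `4` and `7` are coprime, this segment has no interior lattice point and
the Eisenstein–Dumas criterion applies. Multiplicativity of the Gauss norm is what makes the Newton
polygon of a factor a segment of the same slope. Up to sign, `w⁴` and `x⁷` have the coefficients
`5⁶ 13⁸` and `2⁸ 3⁴ 5⁷ 7⁴ 13⁴`, so the argument works whenever `2730 = 2 · 3 · 5 · 7 · 13` is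
invertible.
-/

open Polynomial Polynomial.Bivariate

section EisensteinDumas

variable {R : Type*} [CommRing R] {v : AbsoluteValue R ℝ} {c : ℝ} {f g h : R[X]}

/-- The Newton polygon of `f` with respect to `v` is a single segment, of slope determined by `c`:
the constant and the leading terms both attain the Gauss norm of radius `c`. -/
structure IsSingleSlope (v : AbsoluteValue R ℝ) (c : ℝ) (f : R[X]) : Prop where
  coeff_zero : v (f.coeff 0) = f.gaussNorm v c
  leadingCoeff : v f.leadingCoeff * c ^ f.natDegree = f.gaussNorm v c

theorem isSingleSlope_of_forall_le (hc : 0 ≤ c)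
    (hzero : v (f.coeff 0) = v f.leadingCoeff * c ^ f.natDegree)
    (hle : ∀ i < f.natDegree, v (f.coeff i) * c ^ i ≤ v f.leadingCoeff * c ^ f.natDegree) :
    IsSingleSlope v c f := by
  have lead_eq : v f.leadingCoeff * c ^ f.natDegree = f.gaussNorm v c := by
    refine le_antisymm (f.le_gaussNorm v hc f.natDegree) ?_
    obtain ⟨i, hi⟩ := exists_eq_gaussNorm v c f
    rw [hi]
    rcases lt_trichotomy i f.natDegree with hlt | rfl | hgt
    · exact hle i hlt
    · rfl
    · rw [coeff_eq_zero_of_natDegree_lt hgt, map_zero, zero_mul]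
      positivity
  exact ⟨hzero.trans lead_eq, lead_eq⟩

theorem IsSingleSlope.of_mul_left [IsDomain R] (hv : IsNonarchimedean v) (hc : 0 < c)
    (hgh : g * h ≠ 0) (hs : IsSingleSlope v c (g * h)) : IsSingleSlope v c g := by
  have norm_mul := gaussNorm_mul hv hc g h
  have norm_pos : ∀ {p : R[X]}, p ≠ 0 → 0 < p.gaussNorm v c := fun {p} hp =>
    (p.gaussNorm_nonneg v hc.le).lt_of_ne'
      (mt (gaussNorm_eq_zero_iff v p (fun _ => v.eq_zero.mp) hc).mp hp)
  have coeff_zero_le (p : R[X]) : v (p.coeff 0) ≤ p.gaussNorm v c := by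
    simpa using p.le_gaussNorm v hc.le 0
  have lead_le (p : R[X]) : v p.leadingCoeff * c ^ p.natDegree ≤ p.gaussNorm v c :=
    p.le_gaussNorm v hc.le p.natDegree
  have hg : g ≠ 0 := left_ne_zero_of_mul hgh
  have hh : h ≠ 0 := right_ne_zero_of_mul hgh
  have coeff_zero_mul : v (g.coeff 0) * v (h.coeff 0) = g.gaussNorm v c * h.gaussNorm v c := by
    rw [← norm_mul, ← hs.coeff_zero, mul_coeff_zero, map_mul]
  have lead_mul : v g.leadingCoeff * c ^ g.natDegree * (v h.leadingCoeff * c ^ h.natDegree) =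
      g.gaussNorm v c * h.gaussNorm v c := by
    rw [← norm_mul, ← hs.leadingCoeff, leadingCoeff_mul, natDegree_mul hg hh, map_mul, pow_add]
    ring
  have coeff_zero_pos : 0 < v (g.coeff 0) := v.pos fun h0 => by
    rw [h0, map_zero, zero_mul] at coeff_zero_mul
    exact (mul_pos (norm_pos hg) (norm_pos hh)).ne coeff_zero_mul
  have lead_pos : 0 < v g.leadingCoeff * c ^ g.natDegree :=
    mul_pos (v.pos (leadingCoeff_ne_zero.mpr hg)) (pow_pos hc _)
  exact
    ⟨((mul_eq_mul_iff_eq_and_eq_of_pos (coeff_zero_le g) (coeff_zero_le h) coeff_zero_pos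
        (norm_pos hh)).mp coeff_zero_mul).1,
      ((mul_eq_mul_iff_eq_and_eq_of_pos (lead_le g) (lead_le h) lead_pos (norm_pos hh)).mp
        lead_mul).1⟩

theorem isUnit_of_dvd_of_natDegree_eq_zero (hf : f.IsPrimitive) (hgf : g ∣ f)
    (hg : g.natDegree = 0) : IsUnit g := by
  obtain ⟨a, rfl⟩ := natDegree_eq_zero.mp hg
  exact (hf a hgf).map C

/-- The **Eisenstein–Dumas criterion**. -/
theorem irreducible_of_isSingleSlope [IsDomain R] (hv : IsNonarchimedean v) (hc : 0 < c)
    (hf : f.IsPrimitive) (hdeg : 0 < f.natDegree) (hs : IsSingleSlope v c f)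
    (hslope : ∀ s, 0 < s → s < f.natDegree → ∀ a b : R, b ≠ 0 → v a ≠ v b * c ^ s) :
    Irreducible f := by
  have hf0 : f ≠ 0 := ne_zero_of_natDegree_gt hdeg
  refine ⟨fun hu => hdeg.ne' (natDegree_eq_zero_of_isUnit hu), ?_⟩
  rintro g h rfl
  have hg : g ≠ 0 := left_ne_zero_of_mul hf0
  have hh : h ≠ 0 := right_ne_zero_of_mul hf0
  have hgs : IsSingleSlope v c g := hs.of_mul_left hv hc hf0
  have natDegree_eq : (g * h).natDegree = g.natDegree + h.natDegree := natDegree_mul hg hh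
  have natDegree_extreme : g.natDegree = 0 ∨ (g * h).natDegree ≤ g.natDegree := by
    by_contra! hmid
    exact hslope g.natDegree (Nat.pos_of_ne_zero hmid.1) hmid.2 _ _
      (leadingCoeff_ne_zero.mpr hg) (hgs.coeff_zero.trans hgs.leadingCoeff.symm)
  rcases natDegree_extreme with hg_const | hg_full
  · exact .inl (isUnit_of_dvd_of_natDegree_eq_zero hf (dvd_mul_right g h) hg_const)
  · exact .inr (isUnit_of_dvd_of_natDegree_eq_zero hf (dvd_mul_left h g) (by lia))

theorem isPrimitive_of_isUnit_leadingCoeff (hf : IsUnit f.leadingCoeff) : f.IsPrimitive :=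
  fun _ hr => isUnit_of_dvd_unit (C_dvd_iff_dvd_coeff _ _ |>.mp hr f.natDegree) hf

end EisensteinDumas

section PowDegree

/-- The function `n ↦ b ^ n`, extended by `0` at `⊥`, the degree of the zero polynomial. -/
noncomputable def botPow (b : ℝ) : WithBot ℕ → ℝ :=
  WithBot.recBotCoe 0 (b ^ ·)

variable {b : ℝ}

theorem botPow_nonneg (hb : 0 ≤ b) : ∀ d, 0 ≤ botPow b d
  | ⊥ => le_rfl
  | (n : ℕ) => pow_nonneg hb n

theorem botPow_eq_zero_iff (hb : 0 < b) : ∀ {d}, botPow b d = 0 ↔ d = ⊥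
  | ⊥ => iff_of_true rfl rfl
  | (n : ℕ) => iff_of_false (pow_pos hb n).ne' (WithBot.coe_ne_bot)

theorem botPow_add : ∀ d e, botPow b (d + e) = botPow b d * botPow b e
  | ⊥, _ => (zero_mul _).symm
  | (n : ℕ), ⊥ => (mul_zero _).symm
  | (n : ℕ), (k : ℕ) => pow_add b n k

theorem botPow_mono (hb : 1 ≤ b) : Monotone (botPow b)
  | ⊥, e, _ => botPow_nonneg (zero_le_one.trans hb) e
  | (_ : ℕ), (_ : ℕ), hde => pow_le_pow_right₀ hb (WithBot.coe_le_coe.mp hde)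

variable {R : Type*} [CommRing R]

theorem botPow_degree_add_le_max (hb : 1 ≤ b) (p q : R[X]) :
    botPow b (p + q).degree ≤ max (botPow b p.degree) (botPow b q.degree) :=
  (botPow_mono hb (degree_add_le p q)).trans_eq (botPow_mono hb).map_max

/-- The absolute value `p ↦ b ^ deg p` on `R[X]`, which is the one at infinity when `R` is a
field. -/
noncomputable def powDegree (R : Type*) [CommRing R] [IsDomain R] (b : ℝ) (hb : 1 ≤ b) :
    AbsoluteValue R[X] ℝ where
  toFun p := botPow b p.degree
  map_mul' p q := by rw [degree_mul, botPow_add]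
  nonneg' p := botPow_nonneg (zero_le_one.trans hb) _
  eq_zero' p := (botPow_eq_zero_iff (zero_lt_one.trans_le hb)).trans degree_eq_bot
  add_le' p q := (botPow_degree_add_le_max hb p q).trans
    (max_le_add_of_nonneg (botPow_nonneg (zero_le_one.trans hb) _)
      (botPow_nonneg (zero_le_one.trans hb) _))

variable [IsDomain R]

theorem isNonarchimedean_powDegree (hb : 1 ≤ b) : IsNonarchimedean (powDegree R b hb) :=
  botPow_degree_add_le_max hb

theorem powDegree_of_ne_zero (hb : 1 ≤ b) {p : R[X]} (hp : p ≠ 0) :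
    powDegree R b hb p = b ^ p.natDegree := by
  change botPow b p.degree = b ^ p.natDegree
  rw [degree_eq_natDegree hp]
  rfl

theorem powDegree_le (hb : 1 ≤ b) (p : R[X]) : powDegree R b hb p ≤ b ^ p.natDegree :=
  botPow_mono hb degree_le_natDegree

theorem powDegree_ne_mul_pow_of_coprime {m n s : ℕ} (hcop : m.Coprime n) (hs_pos : 0 < s)
    (hs_lt : s < m) (hm : (1 : ℝ) ≤ 2 ^ m) {p q : R[X]} (hq : q ≠ 0) :
    powDegree R (2 ^ m) hm p ≠ powDegree R (2 ^ m) hm q * (2 ^ n) ^ s := by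
  intro heq
  have hp : p ≠ 0 := by
    rintro rfl
    rw [map_zero] at heq
    exact (mul_pos ((powDegree R (2 ^ m) hm).pos hq) (by positivity)).ne heq
  rw [powDegree_of_ne_zero _ hp, powDegree_of_ne_zero _ hq, ← pow_mul, ← pow_mul, ← pow_mul,
    ← pow_add] at heq
  have exponents_eq : m * p.natDegree = m * q.natDegree + n * s :=
    pow_right_injective₀ two_pos (by norm_num) heq
  have dvd_mul : m ∣ n * s :=
    (Nat.dvd_add_right (dvd_mul_right m _)).mp (exponents_eq ▸ dvd_mul_right m _)
  exact Nat.not_dvd_of_pos_of_lt hs_pos hs_lt (hcop.dvd_of_dvd_mul_left dvd_mul)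

end PowDegree

section Bivariate

variable {R : Type*} [CommRing R] [IsDomain R] {f : R[X][Y]}

theorem irreducible_of_coprime_natDegree_coeff_zero (hlead : IsUnit f.leadingCoeff)
    (hdeg : 0 < f.natDegree) (hzero : f.coeff 0 ≠ 0)
    (hcop : f.natDegree.Coprime (f.coeff 0).natDegree)
    (hle : ∀ i < f.natDegree, f.natDegree * (f.coeff i).natDegree + (f.coeff 0).natDegree * i ≤
      (f.coeff 0).natDegree * f.natDegree) :
    Irreducible f := by
  set m := f.natDegree with hm
  set n := (f.coeff 0).natDegree with hn
  -- The radii `2 ^ m` and `2 ^ n` keep all exponents integral.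
  have one_le : (1 : ℝ) ≤ 2 ^ m := one_le_pow₀ one_le_two
  have two_pow_pos : (0 : ℝ) < 2 ^ n := by positivity
  have lead_eq_one : powDegree R (2 ^ m) one_le f.leadingCoeff = 1 := by
    rw [powDegree_of_ne_zero _ hlead.ne_zero, natDegree_eq_zero_of_isUnit hlead, pow_zero]
  have single_slope : IsSingleSlope (powDegree R (2 ^ m) one_le) (2 ^ n) f := by
    refine isSingleSlope_of_forall_le two_pow_pos.le ?_ fun i hi => ?_
    · rw [lead_eq_one, one_mul, powDegree_of_ne_zero _ hzero, ← hm, ← hn, ← pow_mul, ← pow_mul,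
        mul_comm]
    · calc powDegree R (2 ^ m) one_le (f.coeff i) * (2 ^ n) ^ i
          ≤ (2 ^ m) ^ (f.coeff i).natDegree * (2 ^ n) ^ i := by
            gcongr
            exact powDegree_le _ _
        _ = 2 ^ (m * (f.coeff i).natDegree + n * i) := by rw [pow_add, pow_mul, pow_mul]
        _ ≤ 2 ^ (n * m) := pow_le_pow_right₀ one_le_two (hle i hi)
        _ = _ := by rw [lead_eq_one, one_mul, pow_mul]
  exact irreducible_of_isSingleSlope (isNonarchimedean_powDegree one_le) two_pow_pos
    (isPrimitive_of_isUnit_leadingCoeff hlead) hdeg single_slope fun s hs_pos hs_lt a b hb =>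
      powDegree_ne_mul_pow_of_coprime hcop hs_pos hs_lt one_le hb

theorem irreducible_quartic_of_natDegree_eq_seven {a : R} {b₀ b₁ b₂ b₃ : R[X]} (ha : IsUnit a)
    (h₃ : b₃.natDegree ≤ 1) (h₂ : b₂.natDegree ≤ 3) (h₁ : b₁.natDegree ≤ 5)
    (h₀ : b₀.natDegree = 7) :
    Irreducible (C (C a) * Y ^ 4 + C b₃ * Y ^ 3 + C b₂ * Y ^ 2 + C b₁ * Y + C b₀) := by
  set f : R[X][Y] := C (C a) * Y ^ 4 + C b₃ * Y ^ 3 + C b₂ * Y ^ 2 + C b₁ * Y + C b₀ with hf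
  have natDegree_f : f.natDegree = 4 := by
    rw [hf]
    compute_degree!
    exact ha.ne_zero
  have coeff_zero : f.coeff 0 = b₀ := by simp [hf]
  have leadingCoeff_f : f.leadingCoeff = C a := by
    rw [leadingCoeff, natDegree_f]
    simp [hf]
  apply irreducible_of_coprime_natDegree_coeff_zero
  · exact leadingCoeff_f ▸ ha.map C
  · lia
  · rw [coeff_zero]
    exact ne_zero_of_natDegree_gt (n := 0) (by lia)
  · rw [natDegree_f, coeff_zero, h₀]
    norm_num
  · rw [natDegree_f, coeff_zero, h₀]
    intro i hi
    interval_cases i <;> simp [hf, coeff_X, coeff_C] <;> lia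

end Bivariate

section DixmierRelation

variable {R : Type*} [CommRing R]

/-- The isomorphism `R[u, v] ≃ R[x][w]` given by `u ↦ a x`, `v ↦ w + t(x)`. -/
noncomputable def scaleShearEquiv (a : R) [Invertible a] (t : R[X]) :
    MvPolynomial (Fin 2) R ≃+* R[X][Y] :=
  ((Bivariate.equivMvPolynomial R).symm.trans
    (mapAlgEquiv (algEquivCMulXAddC a 0))).toRingEquiv.trans (algEquivAevalXAddC t).toRingEquiv

@[simp]
theorem scaleShearEquiv_X_zero (a : R) [Invertible a] (t : R[X]) :
    scaleShearEquiv a t (MvPolynomial.X 0) = C (C a * X) := by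
  simp [scaleShearEquiv]

@[simp]
theorem scaleShearEquiv_X_one (a : R) [Invertible a] (t : R[X]) :
    scaleShearEquiv a t (MvPolynomial.X 1) = Y + C t := by
  simp [scaleShearEquiv]

open MvPolynomial in
/-- The polynomial `G(u, v)`, with `u = X 0` and `v = X 1`, over an arbitrary ring. -/
noncomputable def dixmierRelation (R : Type*) [CommRing R] : MvPolynomial (Fin 2) R :=
  (4000000 : MvPolynomial (Fin 2) R) * X 0 ^ 8 - 1998092052000 * X 0 ^ 7
    - 676000000 * X 0 ^ 6 * X 1 - 71509053768117831 * X 0 ^ 6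
    + 224328787434000 * X 0 ^ 5 * X 1 + 42841500000 * X 0 ^ 4 * X 1 ^ 2
    - 395361312253919627346 * X 0 ^ 5 + 8460248600243212740 * X 0 ^ 4 * X 1
    - 8372335651553250 * X 0 ^ 3 * X 1 ^ 2 - 1206702250000 * X 0 ^ 2 * X 1 ^ 3
    + 36392104317997507611465 * X 0 ^ 4 + 31914880192757153442492 * X 0 ^ 3 * X 1
    - 332936970436116610650 * X 0 ^ 2 * X 1 ^ 2 + 103850637726127500 * X 0 * X 1 ^ 3
    + 12745792515625 * X 1 ^ 4 - 826890695963630262273456 * X 0 ^ 3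
    - 9875439964247275663003440 * X 0 ^ 2 * X 1
    - 644187721569909674246640 * X 0 * X 1 ^ 2
    + 4362752394549791982000 * X 1 ^ 3 - 168880832609781468337056 * X 0 ^ 2
    + 30826420907787244648372032 * X 0 * X 1
    + 474410438868202394564990304 * X 1 ^ 2 + 2545539129474834804480 * X 0
    + 6939213188282316797541120 * X 1 + 960605665900794374400

theorem scaleShearEquiv_dixmierRelation [Invertible (13 : R)] :
    scaleShearEquiv 13 (4 * X ^ 2) (dixmierRelation R) =
      C (C 12745792515625) * Y ^ 4 +
      C (1350058290439657500 * X + 4362752394549791982000) * Y ^ 3 +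
      C (-2193321941186600250 * X ^ 3 - 3913319269106203415850 * X ^ 2
        - 8374440380408825765206320 * X + 474410438868202394564990304) * Y ^ 2 +
      C (942335002135800000 * X ^ 5 + 914491180306756604340 * X ^ 4
        + 3121468740216859991504364 * X ^ 3 + 2126334156987829569472341072 * X ^ 2
        + 400743471801234180428836416 * X + 6939213188282316797541120) * Y +
      C (-111091436820000000 * X ^ 7 + 326681968677908187681 * X ^ 6
        - 317966663285927986859802 * X ^ 5 + 1954164497486406779740571289 * X ^ 4
        - 213704971827158964499437168 * X ^ 3 - 784007957923800958797984 * X ^ 2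
        + 33092008683172852458240 * X + 960605665900794374400) := by
  simp only [dixmierRelation, map_add, map_sub, map_neg, map_mul, map_pow, map_ofNat,
    scaleShearEquiv_X_zero, scaleShearEquiv_X_one]
  ring

end DixmierRelation

theorem stmt_2_general {K : Type*} [Field K] (hK : (2730 : K) ≠ 0) :
    Irreducible (dixmierRelation K) := by
  have prime_ne_zero (p q : K) (hpq : p * q = 2730) : p ≠ 0 := left_ne_zero_of_mul (hpq ▸ hK)
  have h2 : (2 : K) ≠ 0 := prime_ne_zero 2 1365 (by norm_num)
  have h3 : (3 : K) ≠ 0 := prime_ne_zero 3 910 (by norm_num)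
  have h5 : (5 : K) ≠ 0 := prime_ne_zero 5 546 (by norm_num)
  have h7 : (7 : K) ≠ 0 := prime_ne_zero 7 390 (by norm_num)
  have h13 : (13 : K) ≠ 0 := prime_ne_zero 13 210 (by norm_num)
  have coeff_w_pow_four_ne_zero : (12745792515625 : K) ≠ 0 := by
    rw [show (12745792515625 : K) = 5 ^ 6 * 13 ^ 8 by norm_num]
    simp [h5, h13]
  have coeff_x_pow_seven_ne_zero : (111091436820000000 : K) ≠ 0 := by
    rw [show (111091436820000000 : K) = 2 ^ 8 * 3 ^ 4 * 5 ^ 7 * 7 ^ 4 * 13 ^ 4 by norm_num]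
    simp [h2, h3, h5, h7, h13]
  let : Invertible (13 : K) := invertibleOfNonzero h13
  rw [← MulEquiv.irreducible_iff (scaleShearEquiv 13 (4 * X ^ 2)), scaleShearEquiv_dixmierRelation]
  apply irreducible_quartic_of_natDegree_eq_seven coeff_w_pow_four_ne_zero.isUnit
  · compute_degree
  · compute_degree
  · compute_degree
  · compute_degree!

open MvPolynomial in
/-- The polynomial `G(u,v)` (with `u = X 0`, `v = X 1`) generating the elimination
ideal cutting out the relation between the Dixmier invariants `I₉` and `I₁₈` of the
family `C₆(r) : y³ = x(x−1)(x−r)(x−1+r)` is irreducible in `ℚ[u,v]`. -/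
theorem stmt_2 :
    Irreducible
      ((4000000 : MvPolynomial (Fin 2) ℚ) * X 0^8 - 1998092052000 * X 0^7
        - 676000000 * X 0^6 * X 1 - 71509053768117831 * X 0^6
        + 224328787434000 * X 0^5 * X 1 + 42841500000 * X 0^4 * X 1^2
        - 395361312253919627346 * X 0^5 + 8460248600243212740 * X 0^4 * X 1
        - 8372335651553250 * X 0^3 * X 1^2 - 1206702250000 * X 0^2 * X 1^3
        + 36392104317997507611465 * X 0^4 + 31914880192757153442492 * X 0^3 * X 1
        - 332936970436116610650 * X 0^2 * X 1^2 + 103850637726127500 * X 0 * X 1^3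
        + 12745792515625 * X 1^4 - 826890695963630262273456 * X 0^3
        - 9875439964247275663003440 * X 0^2 * X 1
        - 644187721569909674246640 * X 0 * X 1^2
        + 4362752394549791982000 * X 1^3 - 168880832609781468337056 * X 0^2
        + 30826420907787244648372032 * X 0 * X 1
        + 474410438868202394564990304 * X 1^2 + 2545539129474834804480 * X 0
        + 6939213188282316797541120 * X 1 + 960605665900794374400) := by
  exact stmt_2_general (by norm_num)
end

section
/- Let F(x,y,z) = y³z − x(x−z)(x−rz)(x−sz) ∈ ℂ[x,y,z] for r,s ∈ ℂ. Suppose a,b ∈ ℂ with (a,b) ≠ (0,0) and there exist λ₀,λ₁,λ₂ ∈ ℂ such that F(x,y,−ax−by) = (λ₀x² + λ₁xy + λ₂y²)² as polynomials in x,y. Then r⁴s⁴a⁹ − 12(r⁴s³ + r³s⁴ + r³s³)a⁷ − 8(r⁴s³ + r³s⁴ + r⁴s² + 15r³s³ + r²s⁴ + r³s² + r²s³)a⁶ + 6(5r⁴s² − 26r³s³ + 5r²s⁴ − 26r³s² − 26r²s³ + 5r²s²)a⁵ + 24(2r⁴s² − 4r³s³ + 2r²s⁴ + 2r⁴s − 7r³s²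 − 7r²s³ + 2rs⁴ − 4r³s − 7r²s² − 4rs³ + 2r²s + 2rs²)a⁴ + 4(4r⁴s² − 8r³s³ + 4r²s⁴ + 17r⁴s − 17r³s² − 17r²s³ + 17rs⁴ + 4r⁴ − 17r³s − 54r²s² − 17rs³ + 4s⁴ − 8r³ − 17r²s − 17rs² − 8s³ + 4r² + 17rs + 4s²)a³ + 24(r⁴s − r³s² − r²s³ + rs⁴ + r⁴ + r³s − 4r²s² + rs³ + s⁴ − r³ − 4r²s − 4rs² − s³ − r² + rs − s² + r + s)a² + 3(3r⁴ + 4r³s − 14r²s² + 4rs³ + 3s⁴ + 4r³ − 4r²s − 4rs² + 4s³ − 14r² − 4rs − 14s² + 4r + 4s + 3)a + 8(r³ − r²s − rs² + s³ − r² + 2rs − s² − r − s + 1) = 0. -/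
/-!
With `e₁, e₂, e₃` the elementary symmetric functions of `1, r, s`, the quartic is
`y³z = x(x³ - e₁x²z + e₂xz² - e₃z³)`, and only the `eᵢ` matter. If `b = 0`, the coefficients of `y⁴`
and `xy³` force `a = 0`. Otherwise the line is parametrised by `(x, z)` through `y = -(z + ax) / b`,
and at `x = 1`, after a change of sign, bitangency reads
`n²z(z + a)³ + (1 - e₁z + e₂z² - e₃z³) = (1 + mz + nz²)²` with `n² = b⁻³`.
The coefficients of `z`, `z²`, `z³` give three equations, and eliminating `m` leaves a cubic and a
quadratic equation for `n`. Their resultant is `a³` times the degree-9 polynomial; for `a = 0` that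
polynomial is a linear combination of the two equations.
-/

theorem eq_of_forall_sum_mul_pow_eq {R : Type*} [CommRing R] [IsDomain R] [Infinite R] {k : ℕ}
    {c d : Fin k → R} (h : ∀ x : R, ∑ i, c i * x ^ (i : ℕ) = ∑ i, d i * x ^ (i : ℕ)) : c = d := by
  have nodes_injective : Function.Injective fun i : Fin k ↦ Infinite.natEmbedding R i :=
    (Infinite.natEmbedding R).injective.comp Fin.val_injective
  refine sub_eq_zero.mp (Matrix.eq_zero_of_forall_index_sum_mul_pow_eq_zero nodes_injective ?_)
  intro j
  simp only [Pi.sub_apply, sub_mul, Finset.sum_sub_distrib, h, sub_self]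

theorem coeffs_eq_of_forall_quartic_eq_sq {R : Type*} [CommRing R] [IsDomain R] [Infinite R]
    {c₀ c₁ c₂ c₃ c₄ l₀ l₁ l₂ : R}
    (h : ∀ x : R, c₀ + c₁ * x + c₂ * x ^ 2 + c₃ * x ^ 3 + c₄ * x ^ 4
      = (l₀ + l₁ * x + l₂ * x ^ 2) ^ 2) :
    c₀ = l₀ ^ 2 ∧ c₁ = 2 * l₀ * l₁ ∧ c₂ = l₁ ^ 2 + 2 * l₀ * l₂ ∧ c₃ = 2 * l₁ * l₂ ∧
      c₄ = l₂ ^ 2 := by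
  have coeffs : ![c₀, c₁, c₂, c₃, c₄]
      = ![l₀ ^ 2, 2 * l₀ * l₁, l₁ ^ 2 + 2 * l₀ * l₂, 2 * l₁ * l₂, l₂ ^ 2] := by
    refine eq_of_forall_sum_mul_pow_eq fun x ↦ ?_
    simp only [Fin.sum_univ_five, Matrix.cons_val, Fin.coe_ofNat_eq_mod]
    linear_combination h x
  exact ⟨congrFun coeffs 0, congrFun coeffs 1, congrFun coeffs 2, congrFun coeffs 3,
    congrFun coeffs 4⟩

theorem resultant_quadratic_cubic_eq_zero_of_common_root {R : Type*} [CommRing R]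
    {c₂ c₁ c₀ d₃ d₂ d₁ d₀ x : R} (quadratic : c₂ * x ^ 2 + c₁ * x + c₀ = 0)
    (cubic : d₃ * x ^ 3 + d₂ * x ^ 2 + d₁ * x + d₀ = 0) :
    c₂ ^ 3 * d₀ ^ 2 - c₂ ^ 2 * c₁ * d₀ * d₁ - 2 * c₂ ^ 2 * c₀ * d₀ * d₂ + c₂ ^ 2 * c₀ * d₁ ^ 2
      + c₂ * c₁ ^ 2 * d₀ * d₂ + 3 * c₂ * c₁ * c₀ * d₀ * d₃ - c₂ * c₁ * c₀ * d₁ * d₂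
      + c₂ * c₀ ^ 2 * d₂ ^ 2 - 2 * c₂ * c₀ ^ 2 * d₁ * d₃ - c₁ ^ 3 * d₀ * d₃
      + c₁ ^ 2 * c₀ * d₁ * d₃ - c₁ * c₀ ^ 2 * d₂ * d₃ + c₀ ^ 3 * d₃ ^ 2 = 0 := by
  have bezout₁ : (c₂ * d₂ - d₃ * c₁) * x ^ 2 + (c₂ * d₁ - d₃ * c₀) * x + c₂ * d₀ = 0 := by
    linear_combination c₂ * cubic - d₃ * x * quadratic
  have bezout₂ : (c₂ * d₁ - d₃ * c₀) * x ^ 2 + (c₂ * d₀ + c₁ * d₁ - d₂ * c₀) * x + c₁ * d₀ = 0 := by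
    linear_combination (c₂ * x + c₁) * cubic - (d₃ * x ^ 2 + d₂ * x) * quadratic
  -- The resultant is minus the determinant of `quadratic, bezout₁, bezout₂` as linear equations in
  -- `(x², x, 1)`; the multipliers are the cofactors of its last column.
  linear_combination
    -((c₂ * d₂ - d₃ * c₁) * (c₂ * d₀ + c₁ * d₁ - d₂ * c₀) - (c₂ * d₁ - d₃ * c₀) ^ 2) * quadratic
    + (c₂ * (c₂ * d₀ + c₁ * d₁ - d₂ * c₀) - c₁ * (c₂ * d₁ - d₃ * c₀)) * bezout₁
    - (c₂ * (c₂ * d₁ - d₃ * c₀) - c₁ * (c₂ * d₂ - d₃ * c₁)) * bezout₂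

namespace PicardQuartic

/-- The form defining the plane quartic `y³z = x(x³ - e₁x²z + e₂xz² - e₃z³)`. The curve `C₃(r, s)`
is the case where `e₁, e₂, e₃` are the elementary symmetric functions of `1, r, s`. -/
def form {R : Type*} [CommRing R] (e₁ e₂ e₃ x y z : R) : R :=
  y ^ 3 * z - x * (x ^ 3 - e₁ * x ^ 2 * z + e₂ * x * z ^ 2 - e₃ * z ^ 3)

/-- The line `ax + by + z = 0` is a bitangent of the quartic `form e₁ e₂ e₃ = 0`: the restriction of
the form to the line is the square of a quadratic form in `x, y`. The equality is one of functions,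
which over an infinite domain amounts to the polynomial identity. -/
def IsBitangent {R : Type*} [CommRing R] (e₁ e₂ e₃ a b : R) : Prop :=
  ∃ l₀ l₁ l₂ : R, ∀ x y : R,
    form e₁ e₂ e₃ x y (-a * x - b * y) = (l₀ * x ^ 2 + l₁ * x * y + l₂ * y ^ 2) ^ 2

theorem isBitangent_esymm_iff {R : Type*} [CommRing R] (p r s a b : R) :
    IsBitangent (p + r + s) (p * r + p * s + r * s) (p * r * s) a b ↔
      ∃ l₀ l₁ l₂ : R, ∀ x y : R,
        y ^ 3 * (-a * x - b * y) - x * (x - p * (-a * x - b * y)) * (x - r * (-a * x - b * y))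
            * (x - s * (-a * x - b * y))
          = (l₀ * x ^ 2 + l₁ * x * y + l₂ * y ^ 2) ^ 2 := by
  have form_eq (x y z : R) : form (p + r + s) (p * r + p * s + r * s) (p * r * s) x y z
      = y ^ 3 * z - x * (x - p * z) * (x - r * z) * (x - s * z) := by
    rw [form]
    ring
  simp only [IsBitangent, form_eq]

/-- The degree-9 polynomial in `a` satisfied by the bitangents `ax + by + z = 0` of
`form e₁ e₂ e₃ = 0`. -/
def bitangentNonic {R : Type*} [CommRing R] (e₁ e₂ e₃ a : R) : R :=
  e₃ ^ 4 * a ^ 9 - 12 * e₁ * e₃ ^ 3 * a ^ 7 - 8 * (e₁ * e₂ + 12 * e₃) * e₃ ^ 2 * a ^ 6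
    + 6 * (5 * e₁ ^ 2 - 36 * e₂) * e₃ ^ 2 * a ^ 5
    + 24 * (2 * e₁ ^ 2 * e₂ - e₁ * e₃ - 8 * e₂ ^ 2) * e₃ * a ^ 4
    + 4 * (9 * e₁ ^ 3 * e₃ + 4 * e₁ ^ 2 * e₂ ^ 2 - 28 * e₁ * e₂ * e₃ - 16 * e₂ ^ 3
        + 12 * e₃ ^ 2) * a ^ 3
    + 24 * (e₁ ^ 3 * e₂ + 2 * e₁ ^ 2 * e₃ - 4 * e₁ * e₂ ^ 2) * a ^ 2
    + 3 * (3 * e₁ ^ 4 - 8 * e₁ ^ 2 * e₂ + 32 * e₁ * e₃ - 16 * e₂ ^ 2) * a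
    + 8 * (e₁ ^ 3 - 4 * e₁ * e₂ + 8 * e₃)

theorem IsBitangent.right_ne_zero {R : Type*} [CommRing R] [IsDomain R] [Infinite R]
    {e₁ e₂ e₃ a b : R} (h : IsBitangent e₁ e₂ e₃ a b) (hab : (a, b) ≠ (0, 0)) : b ≠ 0 := by
  rintro rfl
  obtain ⟨l₀, l₁, l₂, h⟩ := h
  have restriction (y : R) : -(1 + e₁ * a + e₂ * a ^ 2 + e₃ * a ^ 3) + 0 * y + 0 * y ^ 2
      + -a * y ^ 3 + 0 * y ^ 4 = (l₀ + l₁ * y + l₂ * y ^ 2) ^ 2 := by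
    have at_one := h 1 y
    rw [form] at at_one
    linear_combination at_one
  obtain ⟨-, -, -, coeff_three, coeff_four⟩ := coeffs_eq_of_forall_quartic_eq_sq restriction
  have l₂_eq_zero : l₂ = 0 := (pow_eq_zero_iff two_ne_zero).mp coeff_four.symm
  have a_eq_zero : a = 0 := by linear_combination -coeff_three - 2 * l₁ * l₂_eq_zero
  exact hab (by rw [a_eq_zero])

theorem IsBitangent.exists_restriction_eq_sq {K : Type*} [Field K] {e₁ e₂ e₃ a b : K}
    (h : IsBitangent e₁ e₂ e₃ a b) (hb : b ≠ 0) :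
    ∃ l₀ l₁ l₂ : K, l₂ ^ 2 = -(b ^ 3)⁻¹ ∧ ∀ z : K,
      -((b ^ 3)⁻¹ * z * (z + a) ^ 3) - (1 - e₁ * z + e₂ * z ^ 2 - e₃ * z ^ 3)
        = (l₀ + l₁ * z + l₂ * z ^ 2) ^ 2 := by
  obtain ⟨l₀, l₁, l₂, h⟩ := h
  have l₂_sq : l₂ ^ 2 = -b := by
    have at_zero_one := h 0 1
    rw [form] at at_zero_one
    linear_combination -at_zero_one
  refine ⟨l₀ - l₁ * a / b + l₂ * a ^ 2 / b ^ 2, -l₁ / b + 2 * l₂ * a / b ^ 2, l₂ / b ^ 2, ?_, ?_⟩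
  · rw [div_pow, l₂_sq]
    field_simp
  · intro z
    have on_line : -a * 1 - b * (-(z + a) / b) = z := by field_simp; ring
    calc
      _ = form e₁ e₂ e₃ 1 (-(z + a) / b) z := by rw [form]; field_simp
      _ = (l₀ * 1 ^ 2 + l₁ * 1 * (-(z + a) / b) + l₂ * (-(z + a) / b) ^ 2) ^ 2 := by
        rw [← h, on_line]
      _ = _ := by field_simp; ring

theorem IsBitangent.exists_normalized_square {K : Type*} [Field K] {e₁ e₂ e₃ a b : K}
    (h : IsBitangent e₁ e₂ e₃ a b) (hb : b ≠ 0) :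
    ∃ m n : K, ∀ z : K,
      n ^ 2 * z * (z + a) ^ 3 + (1 - e₁ * z + e₂ * z ^ 2 - e₃ * z ^ 3)
        = (1 + m * z + n * z ^ 2) ^ 2 := by
  obtain ⟨l₀, l₁, l₂, l₂_sq, restriction⟩ := h.exists_restriction_eq_sq hb
  have l₀_sq : l₀ ^ 2 = -1 := by linear_combination -restriction 0
  -- Since `l₀² = -1`, multiplying the square root by `-l₀` negates its square and makes its
  -- constant term `1`.
  refine ⟨-l₀ * l₁, -l₀ * l₂, fun z ↦ ?_⟩
  linear_combination -restriction z + z * (z + a) ^ 3 * (l₂ ^ 2 * l₀_sq - l₂_sq)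
    - (1 + (l₁ * z + l₂ * z ^ 2) ^ 2) * l₀_sq

section Elimination

variable {R : Type*} [CommRing R] {e₁ e₂ e₃ a m n : R}

theorem coeff_equations_of_normalized_square [IsDomain R] [Infinite R]
    (h : ∀ z : R, n ^ 2 * z * (z + a) ^ 3 + (1 - e₁ * z + e₂ * z ^ 2 - e₃ * z ^ 3)
      = (1 + m * z + n * z ^ 2) ^ 2) :
    a ^ 3 * n ^ 2 - e₁ = 2 * m ∧ 3 * a ^ 2 * n ^ 2 + e₂ = m ^ 2 + 2 * n ∧
      3 * a * n ^ 2 - e₃ = 2 * m * n := by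
  have expanded (z : R) : 1 + (a ^ 3 * n ^ 2 - e₁) * z + (3 * a ^ 2 * n ^ 2 + e₂) * z ^ 2
      + (3 * a * n ^ 2 - e₃) * z ^ 3 + n ^ 2 * z ^ 4 = (1 + m * z + n * z ^ 2) ^ 2 := by
    linear_combination h z
  obtain ⟨-, coeff_one, coeff_two, coeff_three, -⟩ := coeffs_eq_of_forall_quartic_eq_sq expanded
  simp only [mul_one] at coeff_one coeff_two
  exact ⟨coeff_one, coeff_two, coeff_three⟩

theorem cubic_of_coeff_equations (coeff_one : a ^ 3 * n ^ 2 - e₁ = 2 * m)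
    (coeff_three : 3 * a * n ^ 2 - e₃ = 2 * m * n) :
    a ^ 3 * n ^ 3 + -(3 * a) * n ^ 2 + -e₁ * n + e₃ = 0 := by
  linear_combination n * coeff_one - coeff_three

theorem quadratic_of_coeff_equations (coeff_one : a ^ 3 * n ^ 2 - e₁ = 2 * m)
    (coeff_two : 3 * a ^ 2 * n ^ 2 + e₂ = m ^ 2 + 2 * n)
    (coeff_three : 3 * a * n ^ 2 - e₃ = 2 * m * n) :
    -(e₁ * a ^ 3 + 3 * a ^ 2) * n ^ 2 + (8 + 3 * a * e₁ - e₃ * a ^ 3) * n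
      + (e₁ ^ 2 - 4 * e₂ - 3 * a * e₃) = 0 := by
  have quartic : a ^ 6 * n ^ 4 - (2 * e₁ * a ^ 3 + 12 * a ^ 2) * n ^ 2 + 8 * n
      + (e₁ ^ 2 - 4 * e₂) = 0 := by
    linear_combination (2 * m + a ^ 3 * n ^ 2 - e₁) * coeff_one - 4 * coeff_two
  linear_combination
    quartic - (a ^ 3 * n + 3 * a) * cubic_of_coeff_equations coeff_one coeff_three

theorem bitangentNonic_eq_zero_of_cubic_of_quadratic [IsDomain R]
    (cubic : a ^ 3 * n ^ 3 + -(3 * a) * n ^ 2 + -e₁ * n + e₃ = 0)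
    (quadratic : -(e₁ * a ^ 3 + 3 * a ^ 2) * n ^ 2 + (8 + 3 * a * e₁ - e₃ * a ^ 3) * n
      + (e₁ ^ 2 - 4 * e₂ - 3 * a * e₃) = 0) :
    bitangentNonic e₁ e₂ e₃ a = 0 := by
  rw [bitangentNonic]
  rcases eq_or_ne a 0 with rfl | ha
  · linear_combination 8 * e₁ * quadratic + 64 * cubic
  · refine (mul_eq_zero_iff_left (pow_ne_zero 3 ha)).mp ?_
    linear_combination resultant_quadratic_cubic_eq_zero_of_common_root quadratic cubic

end Elimination

end PicardQuartic

open PicardQuartic in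
theorem stmt_4_general {K : Type*} [Field K] [Infinite K] {e₁ e₂ e₃ a b : K}
    (hab : (a, b) ≠ (0, 0)) (h : IsBitangent e₁ e₂ e₃ a b) :
    bitangentNonic e₁ e₂ e₃ a = 0 := by
  obtain ⟨m, n, square⟩ := h.exists_normalized_square (h.right_ne_zero hab)
  obtain ⟨coeff_one, coeff_two, coeff_three⟩ := coeff_equations_of_normalized_square square
  exact bitangentNonic_eq_zero_of_cubic_of_quadratic
    (cubic_of_coeff_equations coeff_one coeff_three)
    (quadratic_of_coeff_equations coeff_one coeff_two coeff_three)

/-- If the line `ax + by + z = 0` is a bitangent of the plane quartic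
`F(x,y,z) = y³z − x(x−z)(x−rz)(x−sz)` (the curve `C₃(r,s)`), i.e. the restriction
`F(x, y, −ax−by)` is the square of a quadratic form in `x, y`, then `a` satisfies
the stated degree-9 equation.  Since `ℂ` is infinite, the pointwise equality of
the polynomial functions is equivalent to the polynomial identity. -/
theorem stmt_4 (r s a b : ℂ) (hab : (a, b) ≠ (0, 0))
    (h : ∃ l0 l1 l2 : ℂ, ∀ x y : ℂ,
      y^3 * (-a*x - b*y)
        - x * (x - (-a*x - b*y)) * (x - r*(-a*x - b*y)) * (x - s*(-a*x - b*y))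
        = (l0*x^2 + l1*x*y + l2*y^2)^2) :
    r^4*s^4*a^9 - 12*(r^4*s^3 + r^3*s^4 + r^3*s^3)*a^7
    - 8*(r^4*s^3 + r^3*s^4 + r^4*s^2 + 15*r^3*s^3 + r^2*s^4 + r^3*s^2 + r^2*s^3)*a^6
    + 6*(5*r^4*s^2 - 26*r^3*s^3 + 5*r^2*s^4 - 26*r^3*s^2 - 26*r^2*s^3 + 5*r^2*s^2)*a^5
    + 24*(2*r^4*s^2 - 4*r^3*s^3 + 2*r^2*s^4 + 2*r^4*s - 7*r^3*s^2 - 7*r^2*s^3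
        + 2*r*s^4 - 4*r^3*s - 7*r^2*s^2 - 4*r*s^3 + 2*r^2*s + 2*r*s^2)*a^4
    + 4*(4*r^4*s^2 - 8*r^3*s^3 + 4*r^2*s^4 + 17*r^4*s - 17*r^3*s^2 - 17*r^2*s^3
        + 17*r*s^4 + 4*r^4 - 17*r^3*s - 54*r^2*s^2 - 17*r*s^3 + 4*s^4 - 8*r^3
        - 17*r^2*s - 17*r*s^2 - 8*s^3 + 4*r^2 + 17*r*s + 4*s^2)*a^3
    + 24*(r^4*s - r^3*s^2 - r^2*s^3 + r*s^4 + r^4 + r^3*s - 4*r^2*s^2 + r*s^3 + s^4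
        - r^3 - 4*r^2*s - 4*r*s^2 - s^3 - r^2 + r*s - s^2 + r + s)*a^2
    + 3*(3*r^4 + 4*r^3*s - 14*r^2*s^2 + 4*r*s^3 + 3*s^4 + 4*r^3 - 4*r^2*s - 4*r*s^2
        + 4*s^3 - 14*r^2 - 4*r*s - 14*s^2 + 4*r + 4*s + 3)*a
    + 8*(r^3 - r^2*s - r*s^2 + s^3 - r^2 + 2*r*s - s^2 - r - s + 1) = 0 := by
  have bitangent := (PicardQuartic.isBitangent_esymm_iff 1 r s a b).mpr (by simpa only [one_mul])
  have nonic := stmt_4_general hab bitangent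
  rw [PicardQuartic.bitangentNonic] at nonic
  linear_combination nonic
end

section
/- Let F₉(x,y,z) = y³z − x⁴ + xz³ ∈ ℂ[x,y,z]. Suppose a,b ∈ ℂ with (a,b) ≠ (0,0) and there exist λ₀,λ₁,λ₂ ∈ ℂ such that F₉(x,y,−ax−by) = (λ₀x² + λ₁xy + λ₂y²)² as polynomials in x,y. Then a⁹ − 96a⁶ + 48a³ + 64 = 0. -/
/-!
Comparing coefficients in `F₉(x, y, -ax-by) = (l₀x² + l₁xy + l₂y²)²` gives five equations, the last
of which is `b = -l₂²`. Put `t = l₂⁶`. The `xy³` and `x²y²` equations express `2l₂l₁` and `8l₂³l₀`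
as forms in `(t, a)`, and the remaining two then become polynomial equations in `t` and `a`: a cubic
form vanishes at `(t, a)`, and so does a quartic polynomial. Modulo the cubic the quartic is `4t`
times `a q + 16`, where `q = 3t² + 24at + 25a²`. As `2` and `t` are nonzero, `a q = -16`. Finally
`q` is itself a root of a cubic over `ℤ[a]`, and putting `a q = -16` into `a³` times that cubic
yields `-64` times the polynomial sought.
-/

section BinaryForms

open MvPolynomial

theorem coeffs_eq_of_binaryQuartic_eq_sq {R : Type*} [CommSemiring R]
    {c₀ c₁ c₂ c₃ c₄ l₀ l₁ l₂ : R}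
    (h : (C c₀ * X 0 ^ 4 + C c₁ * X 0 ^ 3 * X 1 + C c₂ * X 0 ^ 2 * X 1 ^ 2 + C c₃ * X 0 * X 1 ^ 3
        + C c₄ * X 1 ^ 4 : MvPolynomial (Fin 2) R)
      = (C l₀ * X 0 ^ 2 + C l₁ * X 0 * X 1 + C l₂ * X 1 ^ 2) ^ 2) :
    c₀ = l₀ ^ 2 ∧ c₁ = 2 * l₀ * l₁ ∧ c₂ = l₁ ^ 2 + 2 * l₀ * l₂ ∧ c₃ = 2 * l₁ * l₂ ∧
      c₄ = l₂ ^ 2 := by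
  have dehomogenized : (.C c₀ * .X ^ 4 + .C c₁ * .X ^ 3 + .C c₂ * .X ^ 2 + .C c₃ * .X + .C c₄ :
        Polynomial R)
      = .C (l₀ ^ 2) * .X ^ 4 + .C (2 * l₀ * l₁) * .X ^ 3 + .C (l₁ ^ 2 + 2 * l₀ * l₂) * .X ^ 2
        + .C (2 * l₁ * l₂) * .X + .C (l₂ ^ 2) := by
    have := congrArg (aeval ![(Polynomial.X : Polynomial R), 1]) h
    simp only [map_add, map_mul, map_pow, aeval_X, aeval_C, Polynomial.algebraMap_eq,
      Matrix.cons_val_zero, Matrix.cons_val_one, one_pow, mul_one] at this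
    rw [this]
    simp only [map_add, map_mul, map_pow, map_ofNat]
    ring
  have coeff_eq (n : ℕ) := congrArg (Polynomial.coeff · n) dehomogenized
  simp only [Polynomial.coeff_add, Polynomial.coeff_C_mul, Polynomial.coeff_X_pow,
    Polynomial.coeff_X, Polynomial.coeff_C] at coeff_eq
  exact ⟨by simpa using coeff_eq 4, by simpa using coeff_eq 3, by simpa using coeff_eq 2,
    by simpa using coeff_eq 1, by simpa using coeff_eq 0⟩

end BinaryForms

/-- The coefficient equations of `F₉(x, y, -ax-by) = (l₀x² + l₁xy + l₂y²)²`, which say that the line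
`ax + by + z = 0` is a bitangent of the quartic `F₉ = 0`. Each field is named after its monomial. -/
structure BitangentEquations {R : Type*} [CommRing R] (a b l₀ l₁ l₂ : R) : Prop where
  x4 : -1 - a ^ 3 = l₀ ^ 2
  x3y : -3 * a ^ 2 * b = 2 * l₀ * l₁
  x2y2 : -3 * a * b ^ 2 = l₁ ^ 2 + 2 * l₀ * l₂
  xy3 : -a - b ^ 3 = 2 * l₁ * l₂
  y4 : -b = l₂ ^ 2

section Elimination

variable {R : Type*} [CommRing R] {a t : R}

theorem mul_eq_neg_sixteen_of_cubic_of_quartic [NoZeroDivisors R] (two_ne : (2 : R) ≠ 0)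
    (t_ne : t ≠ 0) (cubic : t ^ 3 + 9 * a * t ^ 2 + 15 * a ^ 2 * t - a ^ 3 = 0)
    (quartic : (t ^ 2 + 10 * a * t + a ^ 2) ^ 2 + 64 * t * (1 + a ^ 3) = 0) :
    a * (3 * t ^ 2 + 24 * a * t + 25 * a ^ 2) = -16 := by
  have reduced : 2 ^ 2 * t * (a * (3 * t ^ 2 + 24 * a * t + 25 * a ^ 2) + 16) = 0 := by
    linear_combination quartic - (t - a) * cubic
  exact eq_neg_of_add_eq_zero_left <|
    (mul_eq_zero.mp reduced).resolve_left (mul_ne_zero (pow_ne_zero 2 two_ne) t_ne)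

theorem cubic_of_quadratic_at_cubic_root
    (cubic : t ^ 3 + 9 * a * t ^ 2 + 15 * a ^ 2 * t - a ^ 3 = 0) {q : R}
    (hq : q = 3 * t ^ 2 + 24 * a * t + 25 * a ^ 2) :
    q ^ 3 - 12 * a ^ 2 * q ^ 2 - 384 * a ^ 4 * q - 64 * a ^ 6 = 0 := by
  subst hq
  linear_combination
    (27 * t ^ 3 + 405 * a * t ^ 2 + 1701 * a ^ 2 * t + 1539 * a ^ 3) * cubic

theorem nonic_eq_zero_of_cubic_of_quartic [NoZeroDivisors R] (two_ne : (2 : R) ≠ 0)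
    (t_ne : t ≠ 0) (cubic : t ^ 3 + 9 * a * t ^ 2 + 15 * a ^ 2 * t - a ^ 3 = 0)
    (quartic : (t ^ 2 + 10 * a * t + a ^ 2) ^ 2 + 64 * t * (1 + a ^ 3) = 0) :
    a ^ 9 - 96 * a ^ 6 + 48 * a ^ 3 + 64 = 0 := by
  obtain ⟨q, hq⟩ : ∃ q, q = 3 * t ^ 2 + 24 * a * t + 25 * a ^ 2 := ⟨_, rfl⟩
  have aq_eq : a * q = -16 :=
    hq ▸ mul_eq_neg_sixteen_of_cubic_of_quartic two_ne t_ne cubic quartic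
  have q_cubic := cubic_of_quadratic_at_cubic_root cubic hq
  have aq_cubic :
      (a * q) ^ 3 - 12 * a ^ 3 * (a * q) ^ 2 - 384 * a ^ 6 * (a * q) - 64 * a ^ 9 = 0 := by
    linear_combination a ^ 3 * q_cubic
  rw [aq_eq] at aq_cubic
  have : 2 ^ 6 * (a ^ 9 - 96 * a ^ 6 + 48 * a ^ 3 + 64) = 0 := by
    linear_combination -aq_cubic
  exact (mul_eq_zero.mp this).resolve_left (pow_ne_zero 6 two_ne)

end Elimination

namespace BitangentEquations

variable {R : Type*} [CommRing R] {a b l₀ l₁ l₂ : R}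

open MvPolynomial in
theorem of_restriction_eq_sq
    (h : (X 1 ^ 3 * (-C a * X 0 - C b * X 1) - X 0 ^ 4 + X 0 * (-C a * X 0 - C b * X 1) ^ 3
        : MvPolynomial (Fin 2) R)
      = (C l₀ * X 0 ^ 2 + C l₁ * X 0 * X 1 + C l₂ * X 1 ^ 2) ^ 2) :
    BitangentEquations a b l₀ l₁ l₂ := by
  obtain ⟨x4, x3y, x2y2, xy3, y4⟩ := coeffs_eq_of_binaryQuartic_eq_sq
    (c₀ := -1 - a ^ 3) (c₁ := -3 * a ^ 2 * b) (c₂ := -3 * a * b ^ 2) (c₃ := -a - b ^ 3)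
    (c₄ := -b) (by
      rw [← h]
      simp only [map_sub, map_mul, map_pow, map_neg, map_one, map_ofNat]
      ring)
  exact ⟨x4, x3y, x2y2, xy3, y4⟩

theorem l₂_ne_zero [NoZeroDivisors R] (h : BitangentEquations a b l₀ l₁ l₂)
    (hab : (a, b) ≠ (0, 0)) : l₂ ≠ 0 := by
  rintro rfl
  have hb : b = 0 := by linear_combination -h.y4
  have ha : a = 0 := by linear_combination -h.xy3 - b ^ 2 * hb
  exact hab (Prod.ext ha hb)

-- In characteristic two the `xy³` and `x³y` equations read `a = b³` and `a²b = 0`.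
theorem two_ne_zero [NoZeroDivisors R] (h : BitangentEquations a b l₀ l₁ l₂)
    (hab : (a, b) ≠ (0, 0)) : (2 : R) ≠ 0 := by
  intro two_eq
  have ha : a = -b ^ 3 := by linear_combination -h.xy3 - l₁ * l₂ * two_eq
  have hb : b = 0 := by
    refine eq_zero_of_pow_eq_zero (n := 7) ?_
    linear_combination -(a - b ^ 3) * b * ha - h.x3y - (l₀ * l₁ + a ^ 2 * b) * two_eq
  exact hab (Prod.ext (by simpa [hb] using ha) hb)

theorem two_mul_l₂_mul_l₁ (h : BitangentEquations a b l₀ l₁ l₂) :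
    2 * l₂ * l₁ = l₂ ^ 6 - a := by
  obtain rfl : b = -l₂ ^ 2 := neg_eq_iff_eq_neg.mp h.y4
  linear_combination -h.xy3

theorem eight_mul_l₂_pow_three_mul_l₀ (h : BitangentEquations a b l₀ l₁ l₂) :
    8 * l₂ ^ 3 * l₀ = -((l₂ ^ 6) ^ 2 + 10 * a * l₂ ^ 6 + a ^ 2) := by
  have hl₁ := h.two_mul_l₂_mul_l₁
  obtain rfl : b = -l₂ ^ 2 := neg_eq_iff_eq_neg.mp h.y4
  linear_combination -4 * l₂ ^ 2 * h.x2y2 - (2 * l₂ * l₁ + l₂ ^ 6 - a) * hl₁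

theorem cubic_eq_zero (h : BitangentEquations a b l₀ l₁ l₂) :
    (l₂ ^ 6) ^ 3 + 9 * a * (l₂ ^ 6) ^ 2 + 15 * a ^ 2 * l₂ ^ 6 - a ^ 3 = 0 := by
  have hl₁ := h.two_mul_l₂_mul_l₁
  have hl₀ := h.eight_mul_l₂_pow_three_mul_l₀
  obtain rfl : b = -l₂ ^ 2 := neg_eq_iff_eq_neg.mp h.y4
  linear_combination
    8 * l₂ ^ 4 * h.x3y + 2 * l₂ * l₁ * hl₀ - ((l₂ ^ 6) ^ 2 + 10 * a * l₂ ^ 6 + a ^ 2) * hl₁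

theorem quartic_eq_zero (h : BitangentEquations a b l₀ l₁ l₂) :
    ((l₂ ^ 6) ^ 2 + 10 * a * l₂ ^ 6 + a ^ 2) ^ 2 + 64 * l₂ ^ 6 * (1 + a ^ 3) = 0 := by
  have hl₀ := h.eight_mul_l₂_pow_three_mul_l₀
  linear_combination
    -64 * l₂ ^ 6 * h.x4 - (8 * l₂ ^ 3 * l₀ - ((l₂ ^ 6) ^ 2 + 10 * a * l₂ ^ 6 + a ^ 2)) * hl₀

end BitangentEquations

open MvPolynomial in
theorem stmt_5_general {R : Type*} [CommRing R] [NoZeroDivisors R] {a b : R}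
    (hab : (a, b) ≠ (0, 0))
    (h : ∃ l₀ l₁ l₂ : R,
      (X 1 ^ 3 * (-C a * X 0 - C b * X 1) - X 0 ^ 4 + X 0 * (-C a * X 0 - C b * X 1) ^ 3
        : MvPolynomial (Fin 2) R)
      = (C l₀ * X 0 ^ 2 + C l₁ * X 0 * X 1 + C l₂ * X 1 ^ 2) ^ 2) :
    a ^ 9 - 96 * a ^ 6 + 48 * a ^ 3 + 64 = 0 := by
  obtain ⟨l₀, l₁, l₂, restriction_eq⟩ := h
  have eqns := BitangentEquations.of_restriction_eq_sq restriction_eq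
  exact nonic_eq_zero_of_cubic_of_quartic (eqns.two_ne_zero hab)
    (pow_ne_zero 6 (eqns.l₂_ne_zero hab)) eqns.cubic_eq_zero eqns.quartic_eq_zero

/-- If the line `ax + by + z = 0` is a bitangent of the plane quartic
`F₉(x,y,z) = y³z − x⁴ + xz³` (the curve `C₉ : y³ = x(x³−1)`), i.e. the restriction
`F₉(x, y, −ax−by)` is the square of a quadratic form in `x, y`, then
`a⁹ − 96a⁶ + 48a³ + 64 = 0`. -/
theorem stmt_5 (a b : ℂ) (hab : (a, b) ≠ (0, 0))
    (h : ∃ l0 l1 l2 : ℂ, ∀ x y : ℂ,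
      y^3 * (-a*x - b*y) - x^4 + x * (-a*x - b*y)^3
        = (l0*x^2 + l1*x*y + l2*y^2)^2) :
    a^9 - 96*a^6 + 48*a^3 + 64 = 0 := by
  obtain ⟨l0, l1, l2, h⟩ := h
  exact stmt_5_general hab ⟨l0, l1, l2, MvPolynomial.funext fun v => by simpa using h (v 0) (v 1)⟩
end

section
/- Let F₉(x,y,z) = y³z − x⁴ + xz³ ∈ ℂ[x,y,z]. Suppose a,b ∈ ℂ with (a,b) ≠ (0,0) and there exist λ₀,λ₁,λ₂ ∈ ℂ such that F₉(x,y,−ax−by) = (λ₀x² + λ₁xy + λ₂y²)² as polynomials in x,y. Then b²⁷ − 29496b¹⁸ + 401808b⁹ − 64 = 0. -/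
/-!
Comparing coefficients in `F₉(x, y, -ax - by) = (l₀x² + l₁xy + l₂y²)²` gives five equations.
Since `l₂² = -b`, those of `xy³` and `x²y²` express `l₁` and `l₀` through `a`, `b`, `l₂`, and the
other two become equations in `a` and `b` alone: a cubic for `a` over `ℤ[b³]`, homogeneous in
`(a, b³)`, and a quartic, which modulo the cubic reads `b³m = 16` for a quadratic form `m` in
`(a, b³)`. The characteristic polynomial of multiplication by `m` modulo the cubic, evaluated at
`m = 16 / b³`, is the required equation for `b`.
-/

section Coefficients

open Polynomial

theorem quartic_coeffs_eq_of_forall_eq {R : Type*} [CommRing R] [IsDomain R] [Infinite R]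
    {c₀ c₁ c₂ c₃ c₄ d₀ d₁ d₂ d₃ d₄ : R}
    (h : ∀ x : R, c₄ * x ^ 4 + c₃ * x ^ 3 + c₂ * x ^ 2 + c₁ * x + c₀ =
      d₄ * x ^ 4 + d₃ * x ^ 3 + d₂ * x ^ 2 + d₁ * x + d₀) :
    c₄ = d₄ ∧ c₃ = d₃ ∧ c₂ = d₂ ∧ c₁ = d₁ ∧ c₀ = d₀ := by
  have polynomials_eq :
      (C c₄ * X ^ 4 + C c₃ * X ^ 3 + C c₂ * X ^ 2 + C c₁ * X + C c₀ : R[X]) =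
        C d₄ * X ^ 4 + C d₃ * X ^ 3 + C d₂ * X ^ 2 + C d₁ * X + C d₀ :=
    Polynomial.funext fun x => by simpa using h x
  have coeff_eq (n : ℕ) := congrArg (coeff · n) polynomials_eq
  simp only [coeff_add, coeff_C_mul, coeff_X_pow, coeff_X, coeff_C] at coeff_eq
  exact ⟨by simpa using coeff_eq 4, by simpa using coeff_eq 3, by simpa using coeff_eq 2,
    by simpa using coeff_eq 1, by simpa using coeff_eq 0⟩

end Coefficients

/-- The line `ax + by + z = 0` is a bitangent of `y³z - x⁴ + xz³ = 0`, with
`l₀x² + l₁xy + l₂y²` a square root of the restricted quartic form. This is expressed by equating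
the coefficients of the two binary quartic forms, which makes sense over every commutative ring;
the field `coeff_xi_yj` compares the coefficients of `xⁱyʲ`. -/
structure IsBitangentC9 {R : Type*} [CommRing R] (a b l₀ l₁ l₂ : R) : Prop where
  coeff_x4 : -1 - a ^ 3 = l₀ ^ 2
  coeff_x3_y : -3 * a ^ 2 * b = 2 * l₀ * l₁
  coeff_x2_y2 : -3 * a * b ^ 2 = l₁ ^ 2 + 2 * l₀ * l₂
  coeff_x_y3 : -a - b ^ 3 = 2 * l₁ * l₂
  coeff_y4 : -b = l₂ ^ 2

namespace IsBitangentC9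

theorem of_forall_eq {R : Type*} [CommRing R] [IsDomain R] [Infinite R] {a b l₀ l₁ l₂ : R}
    (h : ∀ x y : R, y ^ 3 * (-a * x - b * y) - x ^ 4 + x * (-a * x - b * y) ^ 3 =
      (l₀ * x ^ 2 + l₁ * x * y + l₂ * y ^ 2) ^ 2) :
    IsBitangentC9 a b l₀ l₁ l₂ := by
  obtain ⟨x4, x3_y, x2_y2, x_y3, y4⟩ := quartic_coeffs_eq_of_forall_eq
    (c₄ := -1 - a ^ 3) (c₃ := -3 * a ^ 2 * b) (c₂ := -3 * a * b ^ 2) (c₁ := -a - b ^ 3) (c₀ := -b)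
    (d₄ := l₀ ^ 2) (d₃ := 2 * l₀ * l₁) (d₂ := l₁ ^ 2 + 2 * l₀ * l₂) (d₁ := 2 * l₁ * l₂)
    (d₀ := l₂ ^ 2) fun x => by linear_combination h x 1
  exact ⟨x4, x3_y, x2_y2, x_y3, y4⟩

section CommRing

variable {R : Type*} [CommRing R] {a b l₀ l₁ l₂ : R}

theorem eight_mul_l₀_mul_l₂_pow_three (h : IsBitangentC9 a b l₀ l₁ l₂) :
    8 * l₀ * l₂ ^ 3 = -(a ^ 2 - 10 * a * b ^ 3 + b ^ 6) := by
  linear_combination -4 * l₂ ^ 2 * h.coeff_x2_y2 + (-a - b ^ 3 + 2 * l₁ * l₂) * h.coeff_x_y3 +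
    12 * a * b ^ 2 * h.coeff_y4

theorem cubic_eq_zero (h : IsBitangentC9 a b l₀ l₁ l₂) :
    a ^ 3 + 15 * a ^ 2 * b ^ 3 - 9 * a * b ^ 6 + b ^ 9 = 0 := by
  have product : (8 * l₀ * l₂ ^ 3) * (2 * l₁ * l₂) = -24 * a ^ 2 * b ^ 3 := by
    calc
      (8 * l₀ * l₂ ^ 3) * (2 * l₁ * l₂) = 8 * (2 * l₀ * l₁) * (l₂ ^ 2) ^ 2 := by ring
      _ = -24 * a ^ 2 * b ^ 3 := by rw [← h.coeff_x3_y, ← h.coeff_y4]; ring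
  rw [h.eight_mul_l₀_mul_l₂_pow_three, ← h.coeff_x_y3] at product
  linear_combination product

theorem quartic_eq (h : IsBitangentC9 a b l₀ l₁ l₂) :
    (a ^ 2 - 10 * a * b ^ 3 + b ^ 6) ^ 2 = 64 * (1 + a ^ 3) * b ^ 3 := by
  calc
    (a ^ 2 - 10 * a * b ^ 3 + b ^ 6) ^ 2 = (8 * l₀ * l₂ ^ 3) ^ 2 := by
      rw [h.eight_mul_l₀_mul_l₂_pow_three, neg_sq]
    _ = 64 * l₀ ^ 2 * (l₂ ^ 2) ^ 3 := by ring
    _ = 64 * (1 + a ^ 3) * b ^ 3 := by rw [← h.coeff_x4, ← h.coeff_y4]; ring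

end CommRing

section IsDomain

variable {R : Type*} [CommRing R] [IsDomain R] {a b l₀ l₁ l₂ : R}

theorem b_ne_zero (h : IsBitangentC9 a b l₀ l₁ l₂) (hab : (a, b) ≠ (0, 0)) : b ≠ 0 := by
  rintro rfl
  have l₂_eq_zero : l₂ = 0 := by simpa using h.coeff_y4.symm
  have a_eq_zero : a = 0 := by simpa [l₂_eq_zero] using h.coeff_x_y3
  exact hab (by rw [a_eq_zero])

theorem two_ne_zero (h : IsBitangentC9 a b l₀ l₁ l₂) (hab : (a, b) ≠ (0, 0)) : (2 : R) ≠ 0 := by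
  intro two_eq_zero
  have a_eq : a = -b ^ 3 := by linear_combination -h.coeff_x_y3 - l₁ * l₂ * two_eq_zero
  have b_pow_seven : b ^ 7 = 0 := by
    linear_combination h.coeff_x3_y + 3 * b * (a - b ^ 3) * a_eq +
      (2 * b ^ 7 + l₀ * l₁) * two_eq_zero
  exact h.b_ne_zero hab (eq_zero_of_pow_eq_zero b_pow_seven)

theorem b_pow_three_mul_eq_sixteen (h : IsBitangentC9 a b l₀ l₁ l₂) (hab : (a, b) ≠ (0, 0)) :
    b ^ 3 * (399 * a ^ 2 - 228 * a * b ^ 3 + 25 * b ^ 6) = 16 := by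
  have factor_ne_zero : 2 ^ 2 * b ^ 3 ≠ 0 :=
    mul_ne_zero (pow_ne_zero 2 (h.two_ne_zero hab)) (pow_ne_zero 3 (h.b_ne_zero hab))
  apply mul_left_cancel₀ factor_ne_zero
  linear_combination h.quartic_eq - (a - 99 * b ^ 3) * h.cubic_eq_zero

end IsDomain

end IsBitangentC9

-- The coefficients in `m` are those of the characteristic polynomial of multiplication by `m`
-- on `ℤ[t][a]` modulo the cubic, where `t = b³`.
theorem cubic_eq_zero_of_eq_quadratic_form {R : Type*} [CommRing R] {a t m : R}
    (cubic : a ^ 3 + 15 * a ^ 2 * t - 9 * a * t ^ 2 + t ^ 3 = 0)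
    (hm : m = 399 * a ^ 2 - 228 * a * t + 25 * t ^ 2) :
    m ^ 3 - 100452 * t ^ 2 * m ^ 2 + 117984 * t ^ 4 * m - 64 * t ^ 6 = 0 := by
  subst hm
  linear_combination (63521199 * a ^ 3 - 1061711469 * a ^ 2 * t + 579468897 * a * t ^ 2 -
    59817339 * t ^ 3) * cubic

theorem stmt_6_general {R : Type*} [CommRing R] [IsDomain R] [Infinite R] (a b : R)
    (hab : (a, b) ≠ (0, 0))
    (h : ∃ l₀ l₁ l₂ : R, ∀ x y : R,
      y ^ 3 * (-a * x - b * y) - x ^ 4 + x * (-a * x - b * y) ^ 3 =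
        (l₀ * x ^ 2 + l₁ * x * y + l₂ * y ^ 2) ^ 2) :
    b ^ 27 - 29496 * b ^ 18 + 401808 * b ^ 9 - 64 = 0 := by
  obtain ⟨l₀, l₁, l₂, square⟩ := h
  have bitangent := IsBitangentC9.of_forall_eq square
  obtain ⟨m, hm⟩ : ∃ m, m = 399 * a ^ 2 - 228 * a * b ^ 3 + 25 * (b ^ 3) ^ 2 := ⟨_, rfl⟩
  have b_mul_m : b ^ 3 * m = 16 := by
    linear_combination bitangent.b_pow_three_mul_eq_sixteen hab + b ^ 3 * hm
  have m_cubic := cubic_eq_zero_of_eq_quadratic_form (t := b ^ 3)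
    (by linear_combination bitangent.cubic_eq_zero) hm
  apply mul_left_cancel₀ (pow_ne_zero 6 (bitangent.two_ne_zero hab))
  linear_combination -b ^ 9 * m_cubic + ((b ^ 3 * m) ^ 2 + 16 * (b ^ 3 * m) + 256 -
    100452 * b ^ 9 * (b ^ 3 * m + 16) + 117984 * b ^ 18) * b_mul_m

/-- If the line `ax + by + z = 0` is a bitangent of the plane quartic
`F₉(x,y,z) = y³z − x⁴ + xz³` (the curve `C₉ : y³ = x(x³−1)`), i.e. the restriction
`F₉(x, y, −ax−by)` is the square of a quadratic form in `x, y`, then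
`b²⁷ − 29496b¹⁸ + 401808b⁹ − 64 = 0`. -/
theorem stmt_6 (a b : ℂ) (hab : (a, b) ≠ (0, 0))
    (h : ∃ l0 l1 l2 : ℂ, ∀ x y : ℂ,
      y^3 * (-a*x - b*y) - x^4 + x * (-a*x - b*y)^3
        = (l0*x^2 + l1*x*y + l2*y^2)^2) :
    b^27 - 29496*b^18 + 401808*b^9 - 64 = 0 :=
  stmt_6_general a b hab h
end

section
/- Let F(x,y,z) = y³z − x(x−z)(x−rz)(x−sz) ∈ ℂ[x,y,z] for r,s ∈ ℂ. Suppose b ∈ ℂ satisfies one of the following three conditions: (i) r − s = 1 and s²b³ = 4; (ii) r + s = 1 and s²(s−1)²b³ = 4; (iii) r − s = −1 and (s−1)²b³ = 4. Then there exist λ₀,λ₁,λ₂ ∈ ℂ such that F(x,y,−by) = (λ₀x² + λ₁xy + λ₂y²)² as polynomials in x,y; that is, the horizontal line by + z = 0 is a bitangent of the quartic F = 0. -/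
/-!
Each of the three conditions says that the roots `0, 1, r, s` split into two pairs `{e₁, e₂}` and
`{e₃, e₄}` with equal sums, and that `(e₁e₂ - e₃e₄)² b³ = 4`. By the equality of sums, the product
of the four linear factors is a product of two quadratic forms differing only by a multiple of
`z²`, hence a difference of squares `Q(x, z)² - ((e₁e₂ - e₃e₄) z² / 2)²`. The condition on `b` makes
the second square cancel against `y³z` on the line `z = -by`. What remains is `-Q²`, a square
because `-1` is one.
-/

section PairsOfRootsWithEqualSums

variable {R : Type*} [CommRing R] [Invertible (2 : R)] {e₁ e₂ e₃ e₄ b : R}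

theorem prod_linear_eq_sq_sub_sq_of_add_eq_add (hsum : e₁ + e₂ = e₃ + e₄) (x z : R) :
    (x - e₁ * z) * (x - e₂ * z) * (x - e₃ * z) * (x - e₄ * z) =
      (x ^ 2 - (e₁ + e₂) * x * z + ⅟2 * (e₁ * e₂ + e₃ * e₄) * z ^ 2) ^ 2 -
        (⅟2 * (e₁ * e₂ - e₃ * e₄) * z ^ 2) ^ 2 := by
  have half_add_half : (⅟2 : R) + ⅟2 = 1 := invOf_two_add_invOf_two
  have hfst : (x - e₁ * z) * (x - e₂ * z) = x ^ 2 - (e₁ + e₂) * x * z + e₁ * e₂ * z ^ 2 := by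
    ring
  have hsnd : (x - e₃ * z) * (x - e₄ * z) = x ^ 2 - (e₁ + e₂) * x * z + e₃ * e₄ * z ^ 2 := by
    rw [hsum]
    ring
  rw [mul_assoc, hfst, hsnd, sq_sub_sq]
  congr 1
  · linear_combination -(e₁ * e₂ * z ^ 2) * half_add_half
  · linear_combination -(e₃ * e₄ * z ^ 2) * half_add_half

theorem quartic_on_line_eq_neg_sq (hsum : e₁ + e₂ = e₃ + e₄)
    (hb : (e₁ * e₂ - e₃ * e₄) ^ 2 * b ^ 3 = 4) (x y : R) :
    y ^ 3 * (-b * y) -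
        (x - e₁ * (-b * y)) * (x - e₂ * (-b * y)) * (x - e₃ * (-b * y)) * (x - e₄ * (-b * y)) =
      -(x ^ 2 + (e₁ + e₂) * b * x * y + ⅟2 * (e₁ * e₂ + e₃ * e₄) * b ^ 2 * y ^ 2) ^ 2 := by
  have hcancel : (⅟2 * (e₁ * e₂ - e₃ * e₄)) ^ 2 * b ^ 3 = 1 := by
    calc (⅟2 * (e₁ * e₂ - e₃ * e₄)) ^ 2 * b ^ 3
        = ⅟2 ^ 2 * ((e₁ * e₂ - e₃ * e₄) ^ 2 * b ^ 3) := by ring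
      _ = (⅟2 * 2) ^ 2 := by rw [hb]; ring
      _ = 1 := by rw [invOf_mul_self, one_pow]
  rw [prod_linear_eq_sq_sub_sq_of_add_eq_add hsum]
  linear_combination b * y ^ 4 * hcancel

theorem exists_quartic_on_line_eq_sq (hneg : IsSquare (-1 : R)) (hsum : e₁ + e₂ = e₃ + e₄)
    (hb : (e₁ * e₂ - e₃ * e₄) ^ 2 * b ^ 3 = 4) :
    ∃ l0 l1 l2 : R, ∀ x y : R,
      y ^ 3 * (-b * y) -
          (x - e₁ * (-b * y)) * (x - e₂ * (-b * y)) * (x - e₃ * (-b * y)) * (x - e₄ * (-b * y)) =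
        (l0 * x ^ 2 + l1 * x * y + l2 * y ^ 2) ^ 2 := by
  obtain ⟨i, hi⟩ := hneg
  refine ⟨i, i * ((e₁ + e₂) * b), i * (⅟2 * (e₁ * e₂ + e₃ * e₄) * b ^ 2), fun x y => ?_⟩
  rw [quartic_on_line_eq_neg_sq hsum hb, neg_eq_neg_one_mul, hi]
  ring

end PairsOfRootsWithEqualSums

theorem stmt_8_general {R : Type*} [CommRing R] [Invertible (2 : R)] (hneg : IsSquare (-1 : R))
    (r s b : R)
    (h : (r - s = 1 ∧ s ^ 2 * b ^ 3 = 4) ∨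
         (r + s = 1 ∧ s ^ 2 * (s - 1) ^ 2 * b ^ 3 = 4) ∨
         (r - s = -1 ∧ (s - 1) ^ 2 * b ^ 3 = 4)) :
    ∃ l0 l1 l2 : R, ∀ x y : R,
      y ^ 3 * (-b * y) - x * (x - (-b * y)) * (x - r * (-b * y)) * (x - s * (-b * y)) =
        (l0 * x ^ 2 + l1 * x * y + l2 * y ^ 2) ^ 2 := by
  have hpairs : ∃ e₁ e₂ e₃ e₄ : R, e₁ + e₂ = e₃ + e₄ ∧ (e₁ * e₂ - e₃ * e₄) ^ 2 * b ^ 3 = 4 ∧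
      ∀ x z : R, x * (x - z) * (x - r * z) * (x - s * z) =
        (x - e₁ * z) * (x - e₂ * z) * (x - e₃ * z) * (x - e₄ * z) := by
    rcases h with ⟨hrs, hb⟩ | ⟨hrs, hb⟩ | ⟨hrs, hb⟩
    · exact ⟨0, r, 1, s, by linear_combination hrs, by linear_combination hb, fun x z => by ring⟩
    · obtain rfl : r = 1 - s := eq_sub_of_add_eq hrs
      exact ⟨0, 1, 1 - s, s, by ring, by linear_combination hb, fun x z => by ring⟩
    · obtain rfl : r = s - 1 := by linear_combination hrs
      exact ⟨0, s, 1, s - 1, by ring, by linear_combination hb, fun x z => by ring⟩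
  obtain ⟨e₁, e₂, e₃, e₄, hsum, hb, hprod⟩ := hpairs
  simpa only [hprod] using exists_quartic_on_line_eq_sq hneg hsum hb

/-- If `b` satisfies one of the three stated conditions, then the horizontal line
`by + z = 0` is a bitangent of the plane quartic
`F(x,y,z) = y³z − x(x−z)(x−rz)(x−sz)` (the curve `C₃(r,s)`), i.e. the restriction
`F(x, y, −by)` is the square of a quadratic form in `x, y`. -/
theorem stmt_8 (r s b : ℂ)
    (h : (r - s = 1 ∧ s^2 * b^3 = 4) ∨
         (r + s = 1 ∧ s^2 * (s - 1)^2 * b^3 = 4) ∨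
         (r - s = -1 ∧ (s - 1)^2 * b^3 = 4)) :
    ∃ l0 l1 l2 : ℂ, ∀ x y : ℂ,
      y^3 * (-b*y) - x * (x - (-b*y)) * (x - r*(-b*y)) * (x - s*(-b*y))
        = (l0*x^2 + l1*x*y + l2*y^2)^2 :=
  stmt_8_general ⟨Complex.I, Complex.I_mul_I.symm⟩ r s b h
end

section
/- Let F(x,y,z) = y³z − x(x−z)(x−rz)(x−sz) ∈ ℂ[x,y,z] for r,s ∈ ℂ. Suppose b ∈ ℂ, b ≠ 0, and there exist λ₀,λ₁,λ₂ ∈ ℂ such that F(x,y,−by) = (λ₀x² + λ₁xy + λ₂y²)² as polynomials in x,y. Then one of the following three conditions holds: (i) r − s = 1 and s²b³ = 4; (ii) r + s = 1 and s²(s−1)²b³ = 4; (iii) r − s = −1 and (s−1)²b³ = 4. -/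
/-!
On the affine chart `y = 1`, and after absorbing the square root `l0` of `-1`, the bitangency
condition says that `x (x + b) (x + r b) (x + s b) + b` is the square of a monic quadratic `q`.
Hence the quartic with roots `0, -b, -r b, -s b` equals `q² - b`, which over a square root `β` of
`b` splits as `(q - β) (q + β)`. These factors differ by a constant, so the four roots fall into
two pairs with equal sums, and the difference of the products of the pairs is `±2 β`. The three
ways of pairing the roots give the three cases. The proof avoids `β` by comparing coefficients.
-/

section QuarticRoots

open Polynomial

theorem coeffs_eq_of_monic_quartic_eq {R : Type*} [Semiring R] {p₃ p₂ p₁ p₀ q₃ q₂ q₁ q₀ : R}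
    (h : (X ^ 4 + C p₃ * X ^ 3 + C p₂ * X ^ 2 + C p₁ * X + C p₀ : R[X]) =
      X ^ 4 + C q₃ * X ^ 3 + C q₂ * X ^ 2 + C q₁ * X + C q₀) :
    p₃ = q₃ ∧ p₂ = q₂ ∧ p₁ = q₁ ∧ p₀ = q₀ := by
  refine ⟨?_, ?_, ?_, ?_⟩
  · simpa [coeff_X, coeff_C, coeff_X_pow] using congrArg (coeff · 3) h
  · simpa [coeff_X, coeff_C, coeff_X_pow] using congrArg (coeff · 2) h
  · simpa [coeff_X, coeff_C, coeff_X_pow] using congrArg (coeff · 1) h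
  · simpa [coeff_X, coeff_C, coeff_X_pow] using congrArg (coeff · 0) h

variable {R : Type*} [CommRing R] {a b c d m n k : R}

theorem esymm_roots_of_quartic_eq_sq_sub_C
    (h : (X - C a) * (X - C b) * (X - C c) * (X - C d) = (X ^ 2 + C m * X + C n) ^ 2 - C k) :
    a + b + c + d = -2 * m ∧
    a * b + a * c + a * d + b * c + b * d + c * d = m ^ 2 + 2 * n ∧
    a * b * c + a * b * d + a * c * d + b * c * d = -2 * m * n ∧
    a * b * c * d = n ^ 2 - k := by
  have expanded : (X ^ 4 + C (-(a + b + c + d)) * X ^ 3 +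
      C (a * b + a * c + a * d + b * c + b * d + c * d) * X ^ 2 +
      C (-(a * b * c + a * b * d + a * c * d + b * c * d)) * X + C (a * b * c * d) : R[X]) =
      X ^ 4 + C (2 * m) * X ^ 3 + C (m ^ 2 + 2 * n) * X ^ 2 + C (2 * m * n) * X +
        C (n ^ 2 - k) := by
    simp only [C_neg, C_add, C_sub, C_mul, C_pow, C_ofNat]
    linear_combination h
  obtain ⟨h₃, h₂, h₁, h₀⟩ := coeffs_eq_of_monic_quartic_eq expanded
  exact ⟨by linear_combination -h₃, h₂, by linear_combination -h₁, h₀⟩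

-- A permutation of the roots changes an even number of signs among these three Lagrange resolvents,
-- so their product is a polynomial in the elementary symmetric functions.
theorem resolvent_eq_zero_of_quartic_eq_sq_sub_C
    (h : (X - C a) * (X - C b) * (X - C c) * (X - C d) = (X ^ 2 + C m * X + C n) ^ 2 - C k) :
    (a + b - (c + d)) * ((a + c - (b + d)) * (a + d - (b + c))) = 0 := by
  obtain ⟨e₁, e₂, e₃, -⟩ := esymm_roots_of_quartic_eq_sq_sub_C h
  calc
    _ = (a + b + c + d) ^ 3
        - 4 * (a + b + c + d) * (a * b + a * c + a * d + b * c + b * d + c * d)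
        + 8 * (a * b * c + a * b * d + a * c * d + b * c * d) := by ring
    _ = (-2 * m) ^ 3 - 4 * (-2 * m) * (m ^ 2 + 2 * n) + 8 * (-2 * m * n) := by rw [e₁, e₂, e₃]
    _ = 0 := by ring

variable [IsDomain R] [NeZero (2 : R)]

theorem four_mul_eq_sq_of_quartic_eq_sq_sub_C
    (h : (X - C a) * (X - C b) * (X - C c) * (X - C d) = (X ^ 2 + C m * X + C n) ^ 2 - C k)
    (hsum : a + b = c + d) :
    4 * k = (a * b - c * d) ^ 2 := by
  obtain ⟨e₁, e₂, -, e₄⟩ := esymm_roots_of_quartic_eq_sq_sub_C h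
  have hm : m = -(a + b) :=
    mul_left_cancel₀ two_ne_zero (by linear_combination e₁ + hsum)
  have hn : 2 * n = a * b + c * d := by
    rw [hm] at e₂
    linear_combination -(a + b) * hsum - e₂
  calc
    4 * k = (2 * n) ^ 2 - 4 * (a * b * c * d) := by rw [e₄]; ring
    _ = (a * b - c * d) ^ 2 := by rw [hn]; ring

theorem roots_pair_of_quartic_eq_sq_sub_C
    (h : (X - C a) * (X - C b) * (X - C c) * (X - C d) = (X ^ 2 + C m * X + C n) ^ 2 - C k) :
    (a + b = c + d ∧ 4 * k = (a * b - c * d) ^ 2) ∨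
    (a + c = b + d ∧ 4 * k = (a * c - b * d) ^ 2) ∨
    (a + d = b + c ∧ 4 * k = (a * d - b * c) ^ 2) := by
  have hres := resolvent_eq_zero_of_quartic_eq_sq_sub_C h
  simp only [mul_eq_zero, sub_eq_zero] at hres
  rcases hres with hab | hac | had
  · exact .inl ⟨hab, four_mul_eq_sq_of_quartic_eq_sq_sub_C h hab⟩
  · have hswap : (X - C a) * (X - C c) * (X - C b) * (X - C d) =
        (X ^ 2 + C m * X + C n) ^ 2 - C k := by linear_combination h
    exact .inr (.inl ⟨hac, four_mul_eq_sq_of_quartic_eq_sq_sub_C hswap hac⟩)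
  · have hswap : (X - C a) * (X - C d) * (X - C b) * (X - C c) =
        (X ^ 2 + C m * X + C n) ^ 2 - C k := by linear_combination h
    exact .inr (.inr ⟨had, four_mul_eq_sq_of_quartic_eq_sq_sub_C hswap had⟩)

end QuarticRoots

section Bitangent

open Polynomial

variable {R : Type*} [CommRing R] [IsDomain R] [Infinite R]

theorem quartic_eq_sq_sub_C_of_bitangent {r s b l0 l1 l2 : R}
    (h : ∀ x y : R,
      y^3 * (-b*y) - x * (x - (-b*y)) * (x - r*(-b*y)) * (x - s*(-b*y))
        = (l0*x^2 + l1*x*y + l2*y^2)^2) :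
    (X - C 0) * (X - C (-b)) * (X - C (-(r * b))) * (X - C (-(s * b))) =
      (X ^ 2 + C (-(l0 * l1)) * X + C (-(l0 * l2))) ^ 2 - C b := by
  have hl0 : l0 ^ 2 = -1 := by linear_combination -h 1 0
  refine Polynomial.funext fun x => ?_
  simp only [eval_mul, eval_sub, eval_add, eval_pow, eval_X, eval_C]
  have hq : x ^ 2 + -(l0 * l1) * x + -(l0 * l2) = -l0 * (l0 * x ^ 2 + l1 * x + l2) := by
    linear_combination x ^ 2 * hl0
  rw [hq]
  linear_combination -h x 1 - (l0 * x ^ 2 + l1 * x + l2) ^ 2 * hl0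

theorem stmt_9_general [NeZero (2 : R)] (r s b : R) (hb : b ≠ 0)
    (h : ∃ l0 l1 l2 : R, ∀ x y : R,
      y^3 * (-b*y) - x * (x - (-b*y)) * (x - r*(-b*y)) * (x - s*(-b*y))
        = (l0*x^2 + l1*x*y + l2*y^2)^2) :
    (r - s = 1 ∧ s^2 * b^3 = 4) ∨
    (r + s = 1 ∧ s^2 * (s - 1)^2 * b^3 = 4) ∨
    (r - s = -1 ∧ (s - 1)^2 * b^3 = 4) := by
  obtain ⟨l0, l1, l2, h⟩ := h
  rcases roots_pair_of_quartic_eq_sq_sub_C (quartic_eq_sq_sub_C_of_bitangent h) with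
    ⟨hsum, hprod⟩ | ⟨hsum, hprod⟩ | ⟨hsum, hprod⟩
  · obtain rfl : r = 1 - s := mul_left_cancel₀ hb (by linear_combination hsum)
    exact .inr (.inl ⟨by ring, mul_left_cancel₀ hb (by linear_combination -hprod)⟩)
  · obtain rfl : r = 1 + s := mul_left_cancel₀ hb (by linear_combination -hsum)
    exact .inl ⟨by ring, mul_left_cancel₀ hb (by linear_combination -hprod)⟩
  · obtain rfl : r = s - 1 := mul_left_cancel₀ hb (by linear_combination hsum)
    exact .inr (.inr ⟨by ring, mul_left_cancel₀ hb (by linear_combination -hprod)⟩)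

end Bitangent

/-- If the horizontal line `by + z = 0` with `b ≠ 0` is a bitangent of the plane
quartic `F(x,y,z) = y³z − x(x−z)(x−rz)(x−sz)` (the curve `C₃(r,s)`), i.e. the
restriction `F(x, y, −by)` is the square of a quadratic form in `x, y`, then one
of the three stated conditions holds. -/
theorem stmt_9 (r s b : ℂ) (hb : b ≠ 0)
    (h : ∃ l0 l1 l2 : ℂ, ∀ x y : ℂ,
      y^3 * (-b*y) - x * (x - (-b*y)) * (x - r*(-b*y)) * (x - s*(-b*y))
        = (l0*x^2 + l1*x*y + l2*y^2)^2) :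
    (r - s = 1 ∧ s^2 * b^3 = 4) ∨
    (r + s = 1 ∧ s^2 * (s - 1)^2 * b^3 = 4) ∨
    (r - s = -1 ∧ (s - 1)^2 * b^3 = 4) :=
  stmt_9_general r s b hb h
end

section
/- Let b,c,d,e ∈ ℂ with (ce + bd)² + (bc + de)² ≠ 0. Then there exist a, f ∈ ℂ such that a² + b² + c² + d² + e² + f² = 0 and abc + ade + bdf + cef = 0. -/
/-!
The second equation factors as `a (bc + de) + f (ce + bd) = 0`, a line through the origin of the
`(a, f)`-plane with direction `(-(ce + bd), bc + de)`. On the point of that line with parameter `t`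
the first equation reads `t² D = -(b² + c² + d² + e²)`, where `D = (ce + bd)² + (bc + de)²`.
-/

section Field

variable {K : Type*} [Field K]

theorem exists_mul_add_mul_eq_zero_and_sq_add_sq_eq_iff {p q : K} (h : p ^ 2 + q ^ 2 ≠ 0) (k : K) :
    (∃ x y : K, q * x + p * y = 0 ∧ x ^ 2 + y ^ 2 = k) ↔ IsSquare (k / (p ^ 2 + q ^ 2)) := by
  rw [isSquare_iff_exists_sq]
  constructor
  · rintro ⟨x, y, hline, hcircle⟩
    -- Lagrange's identity: `(x² + y²) (p² + q²) = (q y - p x)² + (q x + p y)²`.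
    have lagrange : k * (p ^ 2 + q ^ 2) = (q * y - p * x) ^ 2 := by
      linear_combination (q * x + p * y) * hline - (p ^ 2 + q ^ 2) * hcircle
    refine ⟨(q * y - p * x) / (p ^ 2 + q ^ 2), ?_⟩
    rw [div_pow, ← lagrange, sq (p ^ 2 + q ^ 2), mul_div_mul_right _ _ h]
  · rintro ⟨t, ht⟩
    rw [div_eq_iff h] at ht
    exact ⟨-p * t, q * t, by ring, by linear_combination -ht⟩

theorem stmt_17_general {b c d e : K} (h : (c * e + b * d) ^ 2 + (b * c + d * e) ^ 2 ≠ 0) :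
    (∃ a f : K,
      a ^ 2 + b ^ 2 + c ^ 2 + d ^ 2 + e ^ 2 + f ^ 2 = 0 ∧
      a * b * c + a * d * e + b * d * f + c * e * f = 0) ↔
    IsSquare (-(b ^ 2 + c ^ 2 + d ^ 2 + e ^ 2) /
      ((c * e + b * d) ^ 2 + (b * c + d * e) ^ 2)) := by
  rw [← exists_mul_add_mul_eq_zero_and_sq_add_sq_eq_iff h]
  refine exists₂_congr fun a f ↦ ?_
  have quadric_iff : a ^ 2 + b ^ 2 + c ^ 2 + d ^ 2 + e ^ 2 + f ^ 2 = 0 ↔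
      a ^ 2 + f ^ 2 = -(b ^ 2 + c ^ 2 + d ^ 2 + e ^ 2) := by
    rw [eq_neg_iff_add_eq_zero]
    ring_nf
  have cubic_factor : a * b * c + a * d * e + b * d * f + c * e * f =
      (b * c + d * e) * a + (c * e + b * d) * f := by
    ring
  rw [quadric_iff, cubic_factor, and_comm]

end Field

/-- If `(ce + bd)² + (bc + de)² ≠ 0`, the equations
`a² + b² + c² + d² + e² + f² = 0` and `abc + ade + bdf + cef = 0` of the
determinantal-representation system admit a solution in `a` and `f`. -/
theorem stmt_17 (b c d e : ℂ) (h : (c*e + b*d)^2 + (b*c + d*e)^2 ≠ 0) :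
    ∃ a f : ℂ,
      a^2 + b^2 + c^2 + d^2 + e^2 + f^2 = 0 ∧
      a*b*c + a*d*e + b*d*f + c*e*f = 0 :=
  (stmt_17_general h).mpr (Complex.isSquare _)
end

section
/- Let r,s,a,b,c,f ∈ ℂ with r ≠ 0, s ≠ 0, b ≠ 0, c ≠ 0, and s = 1 − r. Suppose a²rs + b²s + c²r = 0, 2abc(s−r) − 2bcf − 1 = 0, a² + f² + 2(b² + c²) = 0, and af = (b + ic)² (where i² = −1). Then 4(b²s + c²r) − 2(s−r)(b + ic)² − 2(b² + c²) = 1/(4b²c²). -/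
/-!
The left-hand side is the square of `w = a (s - r) - f`, and `h2` says that `2 b c w = 1`.
To expand the square, `r + s = 1` gives `(s - r)² = 1 - 4 r s`; then `h1` eliminates `a² r s`,
`h3` eliminates `a² + f²`, and the cross term `a f` is known from `h4`.
-/

theorem sub_sq_eq_one_sub_four_mul {R : Type*} [CommRing R] {r s : R} (hrs : s = 1 - r) :
    (s - r) ^ 2 = 1 - 4 * (r * s) := by
  subst hrs
  ring

theorem mul_sub_sub_sq_eq {R : Type*} [CommRing R] {r s a f u v : R} (hrs : s = 1 - r)
    (hars : a ^ 2 * r * s + u * s + v * r = 0) (haf : a ^ 2 + f ^ 2 + 2 * (u + v) = 0) :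
    (a * (s - r) - f) ^ 2 = 4 * (u * s + v * r) - 2 * (s - r) * (a * f) - 2 * (u + v) :=
  calc (a * (s - r) - f) ^ 2 = a ^ 2 * (s - r) ^ 2 + f ^ 2 - 2 * (s - r) * (a * f) := by ring
    _ = (a ^ 2 + f ^ 2) - 4 * (a ^ 2 * r * s) - 2 * (s - r) * (a * f) := by
      rw [sub_sq_eq_one_sub_four_mul hrs]
      ring
    _ = 4 * (u * s + v * r) - 2 * (s - r) * (a * f) - 2 * (u + v) := by
      linear_combination haf - 4 * hars

theorem sq_eq_one_div_of_two_mul_mul_mul_eq_one {K : Type*} [Field K] {b c w : K}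
    (h : 2 * b * c * w = 1) : w ^ 2 = 1 / (4 * b ^ 2 * c ^ 2) :=
  calc w ^ 2 = (1 / (2 * b * c)) ^ 2 := by rw [eq_one_div_of_mul_eq_one_right h]
    _ = 1 / (4 * b ^ 2 * c ^ 2) := by
      rw [one_div_pow]
      ring

/-- Keeping the product `a f` in the conclusion covers both roots `a f = (b ± ic)²` of the
fourth equation of the system. -/
theorem stmt_18_general {K : Type*} [Field K] {r s a b c f : K} (hrs : s = 1 - r)
    (h1 : a ^ 2 * r * s + b ^ 2 * s + c ^ 2 * r = 0)
    (h2 : 2 * a * b * c * (s - r) - 2 * b * c * f - 1 = 0)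
    (h3 : a ^ 2 + f ^ 2 + 2 * (b ^ 2 + c ^ 2) = 0) :
    4 * (b ^ 2 * s + c ^ 2 * r) - 2 * (s - r) * (a * f) - 2 * (b ^ 2 + c ^ 2)
      = 1 / (4 * b ^ 2 * c ^ 2) := by
  have hw : 2 * b * c * (a * (s - r) - f) = 1 := by linear_combination h2
  rw [← mul_sub_sub_sq_eq hrs h1 h3]
  exact sq_eq_one_div_of_two_mul_mul_mul_eq_one hw

/-- Under the reduced system (with `e = b`, `d = −c`, `s = 1 − r`) for the
determinantal representation of `C₆`, the degree-6 relation
`4(b²s + c²r) − 2(s−r)(b + ic)² − 2(b² + c²) = 1/(4b²c²)` holds. -/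
theorem stmt_18 (r s a b c f : ℂ)
    (hr : r ≠ 0) (hs : s ≠ 0) (hb : b ≠ 0) (hc : c ≠ 0) (hrs : s = 1 - r)
    (h1 : a^2*r*s + b^2*s + c^2*r = 0)
    (h2 : 2*a*b*c*(s - r) - 2*b*c*f - 1 = 0)
    (h3 : a^2 + f^2 + 2*(b^2 + c^2) = 0)
    (h4 : a*f = (b + Complex.I*c)^2) :
    4*(b^2*s + c^2*r) - 2*(s - r)*(b + Complex.I*c)^2 - 2*(b^2 + c^2)
      = 1/(4*b^2*c^2) := by
  rw [← h4]
  exact stmt_18_general hrs h1 h2 h3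
end
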